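/- arXiv:2103.08027 — 2 statements merged into one kernel-verified Lean document; each statement's English description precedes it below -/
import Mathlib

section
/- Let n ∈ ℕ and let a_1, …, a_n ∈ ℂ. Then the difference ∑_{k=1}^{n} a_k / z^k − ∑_{k=1}^{n} (−1)^k (∑_{l=1}^{k} (−1)^l S_k^{(1)}(l) a_l) / ((z+1)(z+2)⋯(z+k)) is O(1/z^{n+1}) as z → ∞ in ℂ; that is, there exist constants C > 0 and R > 0 such that for all z ∈ ℂ with |z| ≥ R (and z avoiding the poles −1, …, −n and 0) the absolute value of this difference is at most C/|z|^{n+1}. -/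
open Finset in
/-- Unsigned Stirling numbers of the first kind, via the rising-factorial recurrence:
`z(z+1)⋯(z+k−1) = ∑ l, stirling1Unsigned k l * z^l`. -/
def stirling1Unsigned : ℕ → ℕ → ℕ
  | 0, 0 => 1
  | 0, _ + 1 => 0
  | k + 1, 0 => k * stirling1Unsigned k 0
  | k + 1, l + 1 => stirling1Unsigned k l + k * stirling1Unsigned k (l + 1)

/-- The Stirling numbers of the first kind `S_k^{(1)}(l)` of the paper, defined by
`z(z+1)⋯(z+k−1) = (−1)^k ∑_{l=0}^k (−1)^l S_k^{(1)}(l) z^l`, i.e.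
`S_k^{(1)}(l) = (−1)^{k−l}` times the coefficient of `z^l` in the rising factorial. -/
def S1 (k l : ℕ) : ℤ := (-1) ^ (k + l) * stirling1Unsigned k l

/-- The `n`-th Bernoulli polynomial `B_n(x) = ∑_{k=0}^n C(n,k) B_k x^{n−k}`,
with `B_1 = −1/2`. -/
noncomputable def bernPoly (n : ℕ) (x : ℝ) : ℝ :=
  ∑ k ∈ Finset.range (n + 1), (n.choose k : ℝ) * (bernoulli k : ℝ) * x ^ (n - k)

/-- The generalized binomial coefficient `C(w,k) = w(w−1)⋯(w−k+1)/k!`. -/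
noncomputable def cchoose (w : ℂ) (k : ℕ) : ℂ :=
  (∏ i ∈ Finset.range k, (w - i)) / (k.factorial : ℂ)

/-- The rising product `(z+1)(z+2)⋯(z+k)`. -/
noncomputable def risingProd (z : ℂ) (k : ℕ) : ℂ :=
  ∏ i ∈ Finset.range k, (z + i + 1)

/-- The rising product `(x+1)(x+2)⋯(x+k)` over the reals. -/
noncomputable def risingProdR (x : ℝ) (k : ℕ) : ℝ :=
  ∏ i ∈ Finset.range k, (x + i + 1)

/-- The digamma function `ψ(z) = Γ′(z)/Γ(z)`. -/
noncomputable def digamma (z : ℂ) : ℂ := deriv Complex.Gamma z / Complex.Gamma z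
/-!
Write `c(m, l)` for the unsigned Stirling numbers of the first kind. For fixed `l ≥ 1` let `T_m(z)`
be the part of degree at most `l` of `z(z+1)⋯(z+m-1)`. The Stirling recurrence gives
`T_{m+1}(z) = (z + m) T_m(z) - c(m, l) z^{l+1}`, so the quotients `T_m(z) / (z(z+1)⋯(z+m-1))`
telescope, which yields the exact remainder
`1/z^l - ∑_{k=1}^n c(k, l) / ((z+1)⋯(z+k)) = T_{n+1}(z) / (z^{l+1} (z+1)⋯(z+n))`.
Since `T_{n+1}` has degree at most `l`, this is `O(1/z^{n+1})`, and the theorem follows by taking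
linear combinations over `l`.
-/

open Finset Filter Asymptotics Bornology

lemma stirling1Unsigned_eq_stirlingFirst (k l : ℕ) :
    stirling1Unsigned k l = Nat.stirlingFirst k l := by
  induction k generalizing l with
  | zero => cases l <;> rfl
  | succ k ih =>
    cases l with
    | zero => rw [stirling1Unsigned, ih]; cases k <;> simp
    | succ l => rw [stirling1Unsigned, ih, ih, Nat.stirlingFirst_succ_succ, add_comm]

lemma neg_one_pow_mul_S1 {R : Type*} [Ring R] (k l : ℕ) :
    (-1 : R) ^ k * ((-1) ^ l * (S1 k l : R)) = Nat.stirlingFirst k l := by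
  have sign_sq : (-1 : R) ^ (k + l) * (-1) ^ (k + l) = 1 := by
    rw [← pow_add, Even.neg_one_pow ⟨k + l, rfl⟩]
  rw [S1, stirling1Unsigned_eq_stirlingFirst]
  push_cast
  rw [← mul_assoc, ← mul_assoc, ← pow_add, sign_sq, one_mul]

lemma neg_one_pow_mul_sum_S1_mul {R : Type*} [CommRing R] (a : ℕ → R) {k n : ℕ} (hkn : k ≤ n) :
    (-1) ^ k * ∑ l ∈ Icc 1 k, (-1) ^ l * (S1 k l : R) * a l =
      ∑ l ∈ Icc 1 n, a l * Nat.stirlingFirst k l := by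
  have terms_above_eq_zero :
      ∀ l ∈ Icc 1 n, l ∉ Icc 1 k → a l * (Nat.stirlingFirst k l : R) = 0 := by
    intro l hl hlk
    rw [Nat.stirlingFirst_eq_zero_of_lt (by grind), Nat.cast_zero, mul_zero]
  rw [mul_sum, ← sum_subset (Icc_subset_Icc_right hkn) terms_above_eq_zero]
  refine sum_congr rfl fun l _ ↦ ?_
  rw [← neg_one_pow_mul_S1]
  ring

/-- The part of degree at most `l` of the rising factorial `x(x+1)⋯(x+m-1)`, whose coefficients are
the unsigned Stirling numbers of the first kind. It is the numerator of the remainder of the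
inverse factorial expansion of `1 / x ^ l`. -/
def truncRisingFactorial {R : Type*} [Semiring R] (m l : ℕ) (x : R) : R :=
  ∑ j ∈ range (l + 1), (Nat.stirlingFirst m j : R) * x ^ j

lemma truncRisingFactorial_succ {R : Type*} [CommRing R] (m l : ℕ) (x : R) :
    truncRisingFactorial (m + 1) l x =
      (x + m) * truncRisingFactorial m l x - Nat.stirlingFirst m l * x ^ (l + 1) := by
  unfold truncRisingFactorial
  induction l with
  | zero => cases m <;> simp
  | succ l ih =>
    rw [sum_range_succ, ih, sum_range_succ _ (l + 1), Nat.stirlingFirst_succ_succ]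
    push_cast
    ring

lemma truncRisingFactorial_one {R : Type*} [Semiring R] {l : ℕ} (hl : l ≠ 0) (x : R) :
    truncRisingFactorial 1 l x = x := by
  have other_terms_eq_zero :
      ∀ j ∈ range (l + 1), j ≠ 1 → (Nat.stirlingFirst 1 j : R) * x ^ j = 0 := by
    rintro (_ | _ | j) _ hj
    · simp
    · exact absurd rfl hj
    · simp [Nat.stirlingFirst_eq_zero_of_lt]
  rw [truncRisingFactorial, sum_eq_single_of_mem 1 (by grind) other_terms_eq_zero]
  simp [Nat.stirlingFirst_self]

lemma truncRisingFactorial_isBigO_pow {R : Type*} [NormedRing R] [NormMulClass R] (m l : ℕ) :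
    truncRisingFactorial m l =O[cobounded R] (· ^ l) :=
  IsBigO.fun_sum fun _ hj ↦
    (isBigO_pow_pow_cobounded_of_le (Nat.lt_succ_iff.mp (mem_range.mp hj))).const_mul_left _

lemma risingProd_succ (z : ℂ) (k : ℕ) : risingProd z (k + 1) = risingProd z k * (z + k + 1) :=
  prod_range_succ _ k

lemma one_div_pow_sub_sum_stirlingFirst_eq {z : ℂ} {l n : ℕ} (hl : l ≠ 0) (hz : z ≠ 0)
    (hn : risingProd z n ≠ 0) :
    1 / z ^ l - ∑ k ∈ Icc 1 n, (Nat.stirlingFirst k l : ℂ) / risingProd z k =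
      truncRisingFactorial (n + 1) l z / (z ^ (l + 1) * risingProd z n) := by
  induction n with
  | zero =>
    simp only [risingProd, truncRisingFactorial_one hl, zero_add, zero_lt_one, Icc_eq_empty_of_lt,
      sum_empty, sub_zero, range_zero, prod_empty, mul_one]
    field_simp
    ring
  | succ n ih =>
    rw [risingProd_succ] at hn
    obtain ⟨hprod, hfactor⟩ := mul_ne_zero_iff.mp hn
    rw [sum_Icc_succ_top (by simp), ← sub_sub, ih hprod, truncRisingFactorial_succ (n + 1),
      risingProd_succ]
    push_cast
    field_simp
    ring

lemma risingProd_isEquivalent_pow (n : ℕ) : (risingProd · n) ~[cobounded ℂ] (· ^ n) := by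
  have factor_isEquivalent (i : ℕ) : (fun z : ℂ ↦ z + i + 1) ~[cobounded ℂ] id := by
    simpa only [add_assoc] using!
      IsEquivalent.refl.add_isLittleO (isLittleO_const_id_cobounded ((i : ℂ) + 1))
  simpa [risingProd, prod_fn] using!
    IsEquivalent.finsetProd (s := range n) fun i _ ↦ factor_isEquivalent i

lemma eventually_risingProd_ne_zero (n : ℕ) : ∀ᶠ z in cobounded ℂ, risingProd z n ≠ 0 := by
  filter_upwards [(risingProd_isEquivalent_pow n).isBigO_symm.eq_zero_imp,
    eventually_ne_cobounded 0] with z hpow hz hprod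
  exact pow_ne_zero n hz (hpow hprod)

lemma one_div_pow_sub_sum_stirlingFirst_isBigO {l : ℕ} (hl : l ≠ 0) (n : ℕ) :
    (fun z : ℂ ↦ 1 / z ^ l - ∑ k ∈ Icc 1 n, (Nat.stirlingFirst k l : ℂ) / risingProd z k)
      =O[cobounded ℂ] fun z ↦ 1 / z ^ (n + 1) := by
  have exact_remainder :
      (fun z : ℂ ↦ 1 / z ^ l - ∑ k ∈ Icc 1 n, (Nat.stirlingFirst k l : ℂ) / risingProd z k)
        =ᶠ[cobounded ℂ]
      fun z ↦ truncRisingFactorial (n + 1) l z / (z ^ (l + 1) * risingProd z n) := by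
    filter_upwards [eventually_ne_cobounded 0, eventually_risingProd_ne_zero n] with z hz hn
    exact one_div_pow_sub_sum_stirlingFirst_eq hl hz hn
  have degree_count :
      (fun z : ℂ ↦ z ^ l / (z ^ (l + 1) * z ^ n)) =ᶠ[cobounded ℂ] fun z ↦ 1 / z ^ (n + 1) := by
    filter_upwards [eventually_ne_cobounded 0] with z hz
    field_simp
    ring
  have denominator_isTheta :
      (fun z : ℂ ↦ z ^ (l + 1) * risingProd z n) =Θ[cobounded ℂ] fun z ↦ z ^ (l + 1) * z ^ n :=
    (isTheta_refl _ _).mul (risingProd_isEquivalent_pow n).isTheta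
  have remainder_isBigO :
      (fun z : ℂ ↦ truncRisingFactorial (n + 1) l z / (z ^ (l + 1) * risingProd z n))
        =O[cobounded ℂ] fun z ↦ z ^ l / (z ^ (l + 1) * z ^ n) := by
    simpa only [div_eq_mul_inv] using
      (truncRisingFactorial_isBigO_pow (n + 1) l).mul denominator_isTheta.inv.isBigO
  exact exact_remainder.trans_isBigO (remainder_isBigO.trans_eventuallyEq degree_count)

lemma sum_div_pow_sub_weniger_eq (n : ℕ) (a : ℕ → ℂ) (z : ℂ) :
    (∑ k ∈ Icc 1 n, a k / z ^ k) -
        ∑ k ∈ Icc 1 n,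
          (-1 : ℂ) ^ k * (∑ l ∈ Icc 1 k, (-1 : ℂ) ^ l * (S1 k l : ℂ) * a l) / risingProd z k =
      ∑ l ∈ Icc 1 n, a l *
        (1 / z ^ l - ∑ k ∈ Icc 1 n, (Nat.stirlingFirst k l : ℂ) / risingProd z k) := by
  have transform_eq :
      ∑ k ∈ Icc 1 n,
          (-1 : ℂ) ^ k * (∑ l ∈ Icc 1 k, (-1 : ℂ) ^ l * (S1 k l : ℂ) * a l) / risingProd z k =
        ∑ l ∈ Icc 1 n, a l * ∑ k ∈ Icc 1 n, (Nat.stirlingFirst k l : ℂ) / risingProd z k := by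
    simp only [mul_sum]
    rw [sum_comm]
    refine sum_congr rfl fun k hk ↦ ?_
    rw [← mul_sum, neg_one_pow_mul_sum_S1_mul a (mem_Icc.mp hk).2, sum_div]
    simp only [mul_div_assoc]
  simp only [transform_eq, mul_sub, sum_sub_distrib, mul_one_div]

open Finset in
/-- Asymptotic part of the finite Weniger transformation (Lemma 3.1, formula (8)):
the difference between `∑_{k=1}^n a_k/z^k` and its inverse-factorial transform is
`O(1/z^{n+1})` as `z → ∞`. -/
theorem weniger_finite_asymptotic (n : ℕ) (a : ℕ → ℂ) :
    ∃ C > (0 : ℝ), ∃ R > (0 : ℝ), ∀ z : ℂ, R ≤ ‖z‖ →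
      (∀ j : ℕ, j ≤ n → z ≠ -(j : ℂ)) →
      ‖(∑ k ∈ Icc 1 n, a k / z ^ k) -
          ∑ k ∈ Icc 1 n,
            (-1 : ℂ) ^ k * (∑ l ∈ Icc 1 k, (-1 : ℂ) ^ l * (S1 k l : ℂ) * a l) /
              risingProd z k‖ ≤ C / ‖z‖ ^ (n + 1) := by
  have difference_isBigO :
      (fun z : ℂ ↦ ∑ l ∈ Icc 1 n, a l *
        (1 / z ^ l - ∑ k ∈ Icc 1 n, (Nat.stirlingFirst k l : ℂ) / risingProd z k))
        =O[cobounded ℂ] fun z ↦ 1 / z ^ (n + 1) := by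
    refine IsBigO.fun_sum fun l hl ↦ IsBigO.const_mul_left ?_ (a l)
    exact one_div_pow_sub_sum_stirlingFirst_isBigO (Nat.one_le_iff_ne_zero.mp (mem_Icc.mp hl).1) n
  obtain ⟨C, hC, hbound⟩ := difference_isBigO.exists_pos
  obtain ⟨R, -, hR⟩ := hasBasis_cobounded_norm.eventually_iff.mp hbound.bound
  refine ⟨C, hC, max R 1, by positivity, fun z hz _ ↦ ?_⟩
  rw [sum_div_pow_sub_weniger_eq]
  simpa [div_eq_mul_inv] using hR ((le_max_left R 1).trans hz)
end

section
/- Uniqueness of inverse factorial series expansions: Let f : ℂ → ℂ and let (b_k)_{k≥1} and (c_k)_{k≥1} be sequences of complex numbers. Assume that for all z ∈ ℂ with Re(z) > 0 the series ∑_{k=1}^{∞} b_k / ((z+1)(z+2)⋯(z+k)) converges absolutely with sum f(z), and that for every n ∈ ℕ there exist constants C_n > 0 and R_n > 0 such that |f(x) − ∑_{k=1}^{n} c_k / ((x+1)(x+2)⋯(x+k))| ≤ C_n / x^{n+1} for all real x ≥ R_n. Then c_k = b_k for all k ∈ ℕ. -/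
/-!
Since `x ↦ (x+1)⋯(x+k)` grows like `x ^ k`, the functions `1 / ((x+1)⋯(x+k))` form an asymptotic
scale as `x → ∞`, and the coefficients of an expansion along such a scale are unique. So it
suffices that `f` is asymptotic to its own inverse factorial series. For `x₀ ≤ x` the quotient
`((x+1)⋯(x+n)) / ((x+1)⋯(x+n+k))` is at most its value at `x₀`, so absolute convergence at the
single point `x₀` bounds the tail from index `n` on by a constant times `1 / ((x+1)⋯(x+n))`.
-/

open Filter Asymptotics

section AsymptoticScale

variable {α 𝕜 E : Type*} [NormedField 𝕜] [NormedAddCommGroup E] [NormedSpace 𝕜 E] {l : Filter α}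

theorem eq_zero_of_smul_const_isLittleO {φ : α → 𝕜} {v : E} (hφ : ∃ᶠ x in l, φ x ≠ 0)
    (h : (fun x => φ x • v) =o[l] φ) : v = 0 := by
  by_contra hv
  have φ_isBigO : φ =O[l] fun x => φ x • v :=
    IsBigO.of_bound ‖v‖⁻¹ <| .of_forall fun x => by
      rw [norm_smul, mul_left_comm, inv_mul_cancel₀ (norm_ne_zero_iff.2 hv), mul_one]
  exact isLittleO_irrefl hφ (φ_isBigO.trans_isLittleO h)

theorem asymptotic_expansion_unique {φ : ℕ → α → 𝕜} {f : α → E} {a b : ℕ → E} {m : ℕ}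
    (hφ : ∀ n ≥ m, ∃ᶠ x in l, φ n x ≠ 0)
    (ha : ∀ n ≥ m, (fun x => f x - ∑ k ∈ Finset.Icc m n, φ k x • a k) =o[l] φ n)
    (hb : ∀ n ≥ m, (fun x => f x - ∑ k ∈ Finset.Icc m n, φ k x • b k) =o[l] φ n) :
    ∀ n ≥ m, a n = b n := by
  intro n
  induction n using Nat.strong_induction_on with
  | _ n ih =>
    intro hn
    have sum_sub_sum (x : α) : ∑ k ∈ Finset.Icc m n, φ k x • a k -
        ∑ k ∈ Finset.Icc m n, φ k x • b k = φ n x • (a n - b n) := by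
      have lower_terms_eq : ∑ k ∈ Finset.Ico m n, φ k x • a k =
          ∑ k ∈ Finset.Ico m n, φ k x • b k :=
        Finset.sum_congr rfl fun k hk => by
          obtain ⟨hmk, hkn⟩ := Finset.mem_Ico.1 hk
          rw [ih k hkn hmk]
      rw [← Finset.sum_Ico_add_eq_sum_Icc hn, ← Finset.sum_Ico_add_eq_sum_Icc hn,
        lower_terms_eq, add_sub_add_left_eq_sub, smul_sub]
    refine sub_eq_zero.1 (eq_zero_of_smul_const_isLittleO (hφ n hn) ?_)
    simpa only [sub_sub_sub_cancel_left, sum_sub_sum] using (hb n hn).sub (ha n hn)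

end AsymptoticScale

theorem inv_pow_succ_isLittleO_inv_pow (n : ℕ) :
    (fun x : ℝ => (x ^ (n + 1))⁻¹) =o[atTop] fun x => (x ^ n)⁻¹ :=
  (isLittleO_pow_pow_atTop_of_lt n.lt_succ_self).inv_rev <|
    (eventually_ne_atTop 0).mono fun _ hx h => absurd h (pow_ne_zero n hx)

theorem isLittleO_inv_pow_of_norm_le_div_pow_succ {E : Type*} [SeminormedAddCommGroup E]
    {g : ℝ → E} {C R : ℝ} {n : ℕ} (h : ∀ x, R ≤ x → ‖g x‖ ≤ C / x ^ (n + 1)) :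
    g =o[atTop] fun x => (x ^ n)⁻¹ := by
  have bound : g =O[atTop] fun x => C * (x ^ (n + 1))⁻¹ :=
    .of_norm_eventuallyLE <| (eventually_ge_atTop R).mono h
  exact (bound.trans (isBigO_const_mul_self C _ _)).trans_isLittleO
    (inv_pow_succ_isLittleO_inv_pow n)

section RisingProduct

theorem risingProd_ofReal (x : ℝ) (k : ℕ) : risingProd x k = (risingProdR x k : ℂ) := by
  simp only [risingProd, risingProdR, Complex.ofReal_prod, Complex.ofReal_add,
    Complex.ofReal_natCast, Complex.ofReal_one]

theorem div_risingProd_ofReal (x : ℝ) (k : ℕ) (w : ℂ) :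
    w / risingProd x k = (risingProdR x k)⁻¹ • w := by
  rw [risingProd_ofReal, Complex.real_smul, Complex.ofReal_inv, div_eq_inv_mul]

theorem risingProdR_pos {x : ℝ} (hx : -1 < x) (k : ℕ) : 0 < risingProdR x k :=
  Finset.prod_pos fun i _ => by linarith [i.cast_nonneg (α := ℝ)]

theorem risingProdR_le_risingProdR {x y : ℝ} (hx : -1 ≤ x) (hxy : x ≤ y) (k : ℕ) :
    risingProdR x k ≤ risingProdR y k :=
  Finset.prod_le_prod (fun i _ => by linarith [i.cast_nonneg (α := ℝ)])
    fun i _ => by linarith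

theorem risingProdR_add (x : ℝ) (n k : ℕ) :
    risingProdR x (n + k) = risingProdR x n * risingProdR (x + n) k := by
  simp only [risingProdR, Finset.prod_range_add, Nat.cast_add, add_assoc]

theorem inv_risingProdR_add_le {x₀ x : ℝ} (hx₀ : -1 < x₀) (hx : x₀ ≤ x) (n k : ℕ) :
    (risingProdR x (n + k))⁻¹ ≤
      (risingProdR x n)⁻¹ * (risingProdR x₀ n * (risingProdR x₀ (n + k))⁻¹) := by
  have hx₀n : -1 < x₀ + n := by linarith [n.cast_nonneg (α := ℝ)]
  have shifted_pos : 0 < risingProdR (x₀ + n) k := risingProdR_pos hx₀n k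
  have shifted_le : risingProdR (x₀ + n) k ≤ risingProdR (x + n) k :=
    risingProdR_le_risingProdR hx₀n.le (by linarith) k
  have hxn : 0 < risingProdR x n := risingProdR_pos (hx₀.trans_le hx) n
  calc (risingProdR x (n + k))⁻¹
      = (risingProdR x n)⁻¹ * (risingProdR (x + n) k)⁻¹ := by rw [risingProdR_add, mul_inv]
    _ ≤ (risingProdR x n)⁻¹ * (risingProdR (x₀ + n) k)⁻¹ := by gcongr
    _ = (risingProdR x n)⁻¹ * (risingProdR x₀ n * (risingProdR x₀ (n + k))⁻¹) := by
      rw [risingProdR_add, mul_inv, mul_inv_cancel_left₀ (risingProdR_pos hx₀ n).ne']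

theorem risingProdR_isEquivalent_pow (k : ℕ) :
    (fun x => risingProdR x k) ~[atTop] fun x => x ^ k := by
  have factor_isEquivalent (i : ℕ) : (fun x : ℝ => x + i + 1) ~[atTop] fun x => x := by
    simpa only [add_assoc] using! (IsEquivalent.refl (u := id)).add_isLittleO
      (isLittleO_const_id_atTop ((i : ℝ) + 1))
  simpa only [risingProdR, Finset.prod_const, Finset.card_range] using
    IsEquivalent.finsetProd (s := Finset.range k) fun i _ => factor_isEquivalent i

theorem inv_risingProdR_isTheta_inv_pow (k : ℕ) :
    (fun x => (risingProdR x k)⁻¹) =Θ[atTop] fun x => (x ^ k)⁻¹ :=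
  (risingProdR_isEquivalent_pow k).inv.isTheta

end RisingProduct

section InverseFactorialSeries

variable {E : Type*} [NormedAddCommGroup E] [NormedSpace ℝ E]

theorem norm_le_of_hasSum_inv_risingProdR_smul {v : ℕ → E} {s : E} {x₀ x : ℝ} {n : ℕ}
    (hx₀ : -1 < x₀) (hx : x₀ ≤ x)
    (hsum : Summable fun k => ‖(risingProdR x₀ (n + k))⁻¹ • v k‖)
    (hs : HasSum (fun k => (risingProdR x (n + k))⁻¹ • v k) s) :
    ‖s‖ ≤ (risingProdR x n)⁻¹ *
      (risingProdR x₀ n * ∑' k, ‖(risingProdR x₀ (n + k))⁻¹ • v k‖) := by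
  refine hs.norm_le_of_bounded ((hsum.hasSum.mul_left _).mul_left _) fun k => ?_
  have inv_nonneg_of_gt {y : ℝ} (hy : -1 < y) : 0 ≤ (risingProdR y (n + k))⁻¹ :=
    inv_nonneg.2 (risingProdR_pos hy _).le
  calc ‖(risingProdR x (n + k))⁻¹ • v k‖
      = (risingProdR x (n + k))⁻¹ * ‖v k‖ :=
        norm_smul_of_nonneg (inv_nonneg_of_gt (hx₀.trans_le hx)) _
    _ ≤ (risingProdR x n)⁻¹ * (risingProdR x₀ n * (risingProdR x₀ (n + k))⁻¹) * ‖v k‖ := by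
        gcongr
        exact inv_risingProdR_add_le hx₀ hx n k
    _ = (risingProdR x n)⁻¹ * (risingProdR x₀ n * ‖(risingProdR x₀ (n + k))⁻¹ • v k‖) := by
        rw [norm_smul_of_nonneg (inv_nonneg_of_gt hx₀), mul_assoc, mul_assoc]

theorem inverse_factorial_series_remainder_isBigO {f : ℝ → E} {b : ℕ → E} {x₀ : ℝ}
    (hx₀ : -1 < x₀) (hsum : Summable fun k => ‖(risingProdR x₀ (k + 1))⁻¹ • b (k + 1)‖)
    (hf : ∀ᶠ x in atTop, HasSum (fun k => (risingProdR x (k + 1))⁻¹ • b (k + 1)) (f x)) (n : ℕ) :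
    (fun x => f x - ∑ k ∈ Finset.Icc 1 n, (risingProdR x k)⁻¹ • b k) =O[atTop]
      fun x => (x ^ (n + 1))⁻¹ := by
  refine IsBigO.trans_isTheta ?_ (inv_risingProdR_isTheta_inv_pow (n + 1))
  have index_shift (k : ℕ) : k + n + 1 = n + 1 + k := by ring
  have tail_summable := (summable_nat_add_iff n).2 hsum
  simp only [index_shift] at tail_summable
  refine IsBigO.of_bound (risingProdR x₀ (n + 1) *
    ∑' k, ‖(risingProdR x₀ (n + 1 + k))⁻¹ • b (n + 1 + k)‖) ?_
  filter_upwards [hf, eventually_ge_atTop x₀] with x hfx hx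
  have tail_hasSum := (hasSum_nat_add_iff' n).2 hfx
  have sum_range_eq_sum_Icc : ∑ k ∈ Finset.range n, (risingProdR x (k + 1))⁻¹ • b (k + 1) =
      ∑ k ∈ Finset.Icc 1 n, (risingProdR x k)⁻¹ • b k := by
    rw [Finset.range_eq_Ico, Finset.sum_Ico_add' (fun k => (risingProdR x k)⁻¹ • b k), zero_add,
      Finset.Ico_add_one_right_eq_Icc]
  simp only [index_shift, sum_range_eq_sum_Icc] at tail_hasSum
  rw [Real.norm_of_nonneg (inv_nonneg.2 (risingProdR_pos (hx₀.trans_le hx) _).le), mul_comm]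
  exact norm_le_of_hasSum_inv_risingProdR_smul hx₀ hx tail_summable tail_hasSum

theorem inverse_factorial_series_unique_general {f : ℝ → E} {b c : ℕ → E} {x₀ : ℝ}
    (hx₀ : -1 < x₀) (hsum : Summable fun k => ‖(risingProdR x₀ (k + 1))⁻¹ • b (k + 1)‖)
    (hf : ∀ᶠ x in atTop, HasSum (fun k => (risingProdR x (k + 1))⁻¹ • b (k + 1)) (f x))
    (hc : ∀ n ≥ 1, (fun x => f x - ∑ k ∈ Finset.Icc 1 n, (risingProdR x k)⁻¹ • c k) =o[atTop]
      fun x => (x ^ n)⁻¹) :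
    ∀ k ≥ 1, c k = b k := by
  have scale_ne_zero (n : ℕ) : ∃ᶠ x in atTop, (risingProdR x n)⁻¹ ≠ 0 :=
    ((eventually_gt_atTop (-1)).mono fun _ hx => inv_ne_zero (risingProdR_pos hx n).ne').frequently
  refine asymptotic_expansion_unique (f := f) (φ := fun n x => (risingProdR x n)⁻¹)
    (fun n _ => scale_ne_zero n) (fun n hn => ?_) fun n _ => ?_
  · exact (hc n hn).trans_isTheta (inv_risingProdR_isTheta_inv_pow n).symm
  · exact ((inverse_factorial_series_remainder_isBigO hx₀ hsum hf n).trans_isLittleO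
      (inv_pow_succ_isLittleO_inv_pow n)).trans_isTheta (inv_risingProdR_isTheta_inv_pow n).symm

end InverseFactorialSeries

open Finset in
/-- Uniqueness of inverse factorial series expansions (Lemma 3.2). -/
theorem inverse_factorial_series_unique (f : ℂ → ℂ) (b c : ℕ → ℂ)
    (hb : ∀ z : ℂ, 0 < z.re →
      Summable (fun k : ℕ => ‖b (k + 1) / risingProd z (k + 1)‖) ∧
      f z = ∑' k : ℕ, b (k + 1) / risingProd z (k + 1))
    (hc : ∀ n : ℕ, 1 ≤ n → ∃ C > (0 : ℝ), ∃ R > (0 : ℝ), ∀ x : ℝ, R ≤ x →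
      ‖f x - ∑ k ∈ Icc 1 n, c k / risingProd (x : ℂ) k‖ ≤ C / x ^ (n + 1)) :
    ∀ k : ℕ, 1 ≤ k → c k = b k := by
  refine inverse_factorial_series_unique_general (f := fun x => f x) (x₀ := 1) (by norm_num) ?_
    ?_ fun n hn => ?_ <;> simp only [← div_risingProd_ofReal]
  · exact (hb (1 : ℝ) (by simp)).1
  · filter_upwards [eventually_gt_atTop 0] with x hx
    obtain ⟨hsum, hfx⟩ := hb x hx
    exact hfx ▸ hsum.of_norm.hasSum
  · obtain ⟨C, -, R, -, hCR⟩ := hc n hn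
    exact isLittleO_inv_pow_of_norm_le_div_pow_succ hCR
end
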